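/- Let a_1, ..., a_m be integers with a_i ≥ 6 and let Γ be the linear-graph lattice with weight sequence (a_1 - 2) twos, 3, (a_2 - 3) twos, 3, ..., 3, (a_m - 2) twos. Then for any N ≥ m + rk(Γ), the embedding of Γ into the standard lattice Z^N is unique up to an automorphism of Z^N given by permuting and changing signs of the standard basis vectors. -/

import Mathlib

open scoped BigOperators

/-- The standard positive definite inner product on `ℤ^N`. -/
def dot {N : ℕ} (v w : Fin N → ℤ) : ℤ := ∑ i, v i * w i

/-- The weight sequence `(a 1 - 2)` twos, `3`, `(a 2 - 3)` twos, `3`, …, `3`,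
`(a m - 2)` twos of the linear plumbing graph dual to `(a 1, …, a m)`. -/
def weightList (m : ℕ) (a : ℕ → ℕ) : List ℕ :=
  List.replicate (a 1 - 2) 2 ++
    (List.range (m - 1)).flatMap fun i =>
      3 :: List.replicate (a (i + 2) - (if i = m - 2 then 2 else 3)) 2

/-- The Gram matrix of the integral lattice determined by a linear graph with
the given vertex weights: consecutive vertices pair to `1`, non-adjacent ones to `0`. -/
def linGram (w : List ℕ) : Matrix (Fin w.length) (Fin w.length) ℤ :=
  Matrix.of fun i j =>
    if i = j then (w.get i : ℤ)
    else if i.val + 1 = j.val ∨ j.val + 1 = i.val then 1 else 0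

/-!
A vector of norm at most three in `ℤ^N` has entries `0`, `1`, `-1`, so the product of two such
vectors has the parity of the number of coordinates that their supports share. These parities alone
force the supports of non-adjacent vertices to be disjoint.

* Two twos that meet have the same support, but some vertex is adjacent to exactly one of them.
* The neighbours of a three are twos with disjoint supports, and each occupies a coordinate of the
  support of the three. A vertex avoiding both neighbours can thus meet the three in at most one
  coordinate, hence by parity in none. This settles a two at distance at least three.
* If a two at distance two from a three meets it, it is contained in it, so that the next two,
  at distance three, meets it as well.
* The second item now applies to a pair of threes.

The supports therefore meet exactly as often as the Gram matrix says, and a coordinate lies in at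
most two of them. Inclusion–exclusion then determines how many coordinates lie in precisely a given
set of supports, which gives the permutation. Since the product of two of the vectors equals the
number of coordinates they share, their entries agree there, so that every coordinate carries a
single sign.
-/

section FiniteSets

open Finset

section Parity

variable {α : Type*} [DecidableEq α] {A B C T : Finset α}

theorem subset_of_even_card_inter (hA : #A ≤ 2) (heven : Even #(A ∩ B)) (hAB : ¬Disjoint A B) :
    A ⊆ B := by
  have hpos : 0 < #(A ∩ B) := card_pos.2 (not_disjoint_iff_nonempty_inter.1 hAB)
  obtain ⟨c, hc⟩ := heven
  exact inter_eq_left.1 (eq_of_subset_of_card_le inter_subset_left (by omega))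

theorem disjoint_of_even_card_inter (hT : #T ≤ 3) (hA : (A ∩ T).Nonempty) (hB : (B ∩ T).Nonempty)
    (hAB : Disjoint A B) (hAC : Disjoint A C) (hBC : Disjoint B C) (heven : Even #(T ∩ C)) :
    Disjoint T C := by
  have hdisj : Disjoint (A ∩ T ∪ B ∩ T) (T ∩ C) :=
    ((hAC.mono inter_subset_left inter_subset_right).sup_left
      (hBC.mono inter_subset_left inter_subset_right))
  have hsub : A ∩ T ∪ B ∩ T ∪ T ∩ C ⊆ T :=
    union_subset (union_subset inter_subset_right inter_subset_right) inter_subset_left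
  have hle : #(A ∩ T) + #(B ∩ T) + #(T ∩ C) ≤ #T := by
    rw [← card_union_of_disjoint (hAB.mono inter_subset_left inter_subset_left),
      ← card_union_of_disjoint hdisj]
    exact card_le_card hsub
  have hA' := hA.card_pos
  have hB' := hB.card_pos
  obtain ⟨c, hc⟩ := heven
  rw [disjoint_iff_inter_eq_empty, ← card_eq_zero]
  omega

end Parity

section Incidence

variable {ι κ : Type*} [Fintype ι]

theorem exists_perm_comp_eq_of_card_fiber_eq [DecidableEq κ] {f g : ι → κ}
    (h : ∀ c, #{p | f p = c} = #{p | g p = c}) : ∃ σ : Equiv.Perm ι, ∀ p, f (σ p) = g p := by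
  have e (c : κ) : Nonempty ({p // g p = c} ≃ {p // f p = c}) := by
    rw [← Fintype.card_eq, Fintype.card_subtype, Fintype.card_subtype, h]
  exact ⟨Equiv.ofFiberEquiv fun c => (e c).some, Equiv.ofFiberEquiv_map _⟩

theorem card_filter_subset_eq_add_sum_Ioi [Fintype κ] [DecidableEq κ] (A : ι → Finset κ)
    (U : Finset κ) : #{p | U ⊆ A p} = #{p | A p = U} + ∑ V ∈ Ioi U, #{p | A p = V} := by
  rw [card_eq_sum_card_fiberwise (t := Ici U) (f := A) (fun p hp => by simpa using hp),
    sum_congr rfl fun V hV => ?_, ← Ioi_insert, sum_insert (by simp)]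
  congr 1
  ext p
  simp only [mem_filter, mem_univ, true_and, and_iff_right_iff_imp]
  rintro rfl
  simpa using hV

variable [Finite κ] [DecidableEq κ] {A B : ι → Finset κ}

theorem card_filter_eq_of_card_filter_subset_eq
    (h : ∀ U, #{p | U ⊆ A p} = #{p | U ⊆ B p}) (U : Finset κ) :
    #{p | A p = U} = #{p | B p = U} := by
  cases nonempty_fintype κ
  induction U using WellFoundedGT.induction with
  | ind U ih =>
    have hA := card_filter_subset_eq_add_sum_Ioi A U
    have hB := card_filter_subset_eq_add_sum_Ioi B U
    have hsum : ∑ V ∈ Ioi U, #{p | A p = V} = ∑ V ∈ Ioi U, #{p | B p = V} :=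
      sum_congr rfl fun V hV => ih V (mem_Ioi.1 hV)
    have hU := h U
    omega

theorem exists_perm_comp_eq_of_card_pair_subset_eq (hA : ∀ p, #(A p) ≤ 2) (hB : ∀ p, #(B p) ≤ 2)
    (h : ∀ i j, #{p | {i, j} ⊆ A p} = #{p | {i, j} ⊆ B p}) :
    ∃ σ : Equiv.Perm ι, ∀ p, A (σ p) = B p := by
  refine exists_perm_comp_eq_of_card_fiber_eq (card_filter_eq_of_card_filter_subset_eq fun U => ?_)
  obtain hU | hU | hU | hU : #U = 0 ∨ #U = 1 ∨ #U = 2 ∨ 2 < #U := by omega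
  · rw [card_eq_zero.1 hU]
    simp
  · obtain ⟨i, rfl⟩ := card_eq_one.1 hU
    simpa using h i i
  · obtain ⟨i, j, -, rfl⟩ := card_eq_two.1 hU
    exact h i j
  · have hempty {D : ι → Finset κ} (hD : ∀ p, #(D p) ≤ 2) : ({p | U ⊆ D p} : Finset ι) = ∅ :=
      filter_eq_empty_iff.2 fun p _ hp => (hU.trans_le (card_le_card hp)).not_ge (hD p)
    rw [hempty hA, hempty hB]

end Incidence

end FiniteSets

section SparseLists

/-- Weight sequences of twos and threes in which every three has at least three twos on either
side of it before the next three or the end of the sequence. -/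
structure IsSparse (L : List ℕ) : Prop where
  three_le_length : 3 ≤ L.length
  eq_two_or_three : ∀ x ∈ L, x = 2 ∨ x = 3
  three_le : ∀ t, L[t]? = some 3 → 3 ≤ t
  getElem?_eq_two : ∀ s t, L[t]? = some 3 → s ≠ t → s ≤ t + 3 → t ≤ s + 3 → L[s]? = some 2

theorem getElem?_replicate_append_cons {α : Type*} (x y : α) (l : List α) (k t : ℕ) :
    (List.replicate k x ++ y :: l)[t]? =
      if t < k then some x else if t = k then some y else l[t - k - 1]? := by
  split_ifs with hlt heq
  · simp [List.getElem?_append, hlt]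
  · simp [heq]
  · rw [List.getElem?_append_right (by simpa using hlt), List.length_replicate,
      List.getElem?_cons, if_neg (by omega)]

theorem isSparse_replicate {k : ℕ} (hk : 3 ≤ k) : IsSparse (List.replicate k 2) where
  three_le_length := by simpa
  eq_two_or_three _ hx := Or.inl (List.eq_of_mem_replicate hx)
  three_le t ht := by simp [List.getElem?_replicate] at ht
  getElem?_eq_two s t ht := by simp [List.getElem?_replicate] at ht

namespace IsSparse

variable {L : List ℕ}

theorem getElem?_eq_two_of_lt_three (hL : IsSparse L) {t : ℕ} (ht : t < 3) : L[t]? = some 2 := by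
  have hlt : t < L.length := ht.trans_le hL.three_le_length
  rcases hL.eq_two_or_three L[t] (List.getElem_mem hlt) with h | h
  · exact List.getElem?_eq_some_iff.2 ⟨hlt, h⟩
  · have := hL.three_le t (List.getElem?_eq_some_iff.2 ⟨hlt, h⟩)
    omega

theorem replicate_append_three_cons (hL : IsSparse L) {k : ℕ} (hk : 3 ≤ k) :
    IsSparse (List.replicate k 2 ++ 3 :: L) where
  three_le_length := by
    simp only [List.length_append, List.length_replicate, List.length_cons]
    omega
  eq_two_or_three x hx := by
    rcases List.mem_append.1 hx with hx | hx
    · exact Or.inl (List.eq_of_mem_replicate hx)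
    · rcases List.mem_cons.1 hx with rfl | hx
      · exact Or.inr rfl
      · exact hL.eq_two_or_three x hx
  three_le t ht := by
    rw [getElem?_replicate_append_cons] at ht
    split_ifs at ht with hlt heq
    · simp at ht
    · omega
    · have := hL.three_le _ ht
      omega
  getElem?_eq_two s t ht hst hs ht' := by
    rw [getElem?_replicate_append_cons] at ht ⊢
    by_cases hsk : s < k
    · simp [hsk]
    by_cases htk : t = k
    · rw [if_neg hsk, if_neg (by omega)]
      exact hL.getElem?_eq_two_of_lt_three (by omega)
    by_cases htk' : t < k
    · simp [htk'] at ht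
    rw [if_neg htk', if_neg htk] at ht
    have hle := hL.three_le _ ht
    rw [if_neg hsk, if_neg (by omega)]
    exact hL.getElem?_eq_two _ _ ht (by omega) (by omega) (by omega)

end IsSparse

theorem isSparse_replicate_append_flatMap {ι : Type*} {k : ℕ} (hk : 3 ≤ k) {l : List ι} {b : ι → ℕ}
    (hb : ∀ i ∈ l, 3 ≤ b i) :
    IsSparse (List.replicate k 2 ++ l.flatMap fun i => 3 :: List.replicate (b i) 2) := by
  induction l generalizing k with
  | nil => simpa using isSparse_replicate hk
  | cons i l ih =>
    have htail := ih (hb i List.mem_cons_self) fun j hj => hb j (List.mem_cons_of_mem i hj)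
    simpa using htail.replicate_append_three_cons hk

theorem isSparse_weightList {m : ℕ} {a : ℕ → ℕ} (hm : 1 ≤ m)
    (ha : ∀ i, 1 ≤ i → i ≤ m → 6 ≤ a i) : IsSparse (weightList m a) := by
  have h1 := ha 1 le_rfl hm
  refine isSparse_replicate_append_flatMap (by omega) fun i hi => ?_
  have hi' := ha (i + 2) (by omega) (by have := List.mem_range.1 hi; omega)
  split <;> omega

theorem four_le_length_weightList {m : ℕ} {a : ℕ → ℕ} (h : 6 ≤ a 1) :
    4 ≤ (weightList m a).length := by
  simp only [weightList, List.length_append, List.length_replicate]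
  omega

end SparseLists

section ParityRealization

open Finset

/-- Finite sets indexed by the vertices of the linear graph with weights `L`, having the weights as
cardinalities and the entries of the Gram matrix as the parities of their intersections. The
supports of vectors spanning a copy of the linear-graph lattice in `ℤ^N` are the example of
interest; recording them this way forgets all signs. -/
structure IsParityRealization {α : Type*} [DecidableEq α] (L : List ℕ)
    (S : Fin L.length → Finset α) : Prop where
  card_eq : ∀ i, #(S i) = L.get i
  modEq_linGram : ∀ i j, (#(S i ∩ S j) : ℤ) ≡ linGram L i j [ZMOD 2]

theorem IsSparse.get_eq_two_or_three {L : List ℕ} (hL : IsSparse L) (i : Fin L.length) :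
    L.get i = 2 ∨ L.get i = 3 :=
  hL.eq_two_or_three _ (List.get_mem L i)

theorem IsSparse.exists_get_eq_two {L : List ℕ} (hL : IsSparse L) {t : Fin L.length}
    (ht : L.get t = 3) {s : ℕ} (hst : s ≠ t) (hs : s ≤ t + 3) (ht' : t ≤ s + 3) :
    ∃ r : Fin L.length, (r : ℕ) = s ∧ L.get r = 2 := by
  obtain ⟨hlt, h⟩ := List.getElem?_eq_some_iff.1 <|
    hL.getElem?_eq_two s t (List.getElem?_eq_some_iff.2 ⟨t.2, ht⟩) hst hs ht'
  exact ⟨⟨s, hlt⟩, rfl, h⟩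

theorem IsSparse.three_le_of_get_eq_three {L : List ℕ} (hL : IsSparse L) {t : Fin L.length}
    (ht : L.get t = 3) : 3 ≤ (t : ℕ) :=
  hL.three_le t (List.getElem?_eq_some_iff.2 ⟨t.2, ht⟩)

theorem linGram_self (L : List ℕ) (i : Fin L.length) : linGram L i i = L.get i := by
  simp [linGram]

theorem linGram_eq_one {L : List ℕ} {i j : Fin L.length}
    (hij : (i : ℕ) + 1 = j ∨ (j : ℕ) + 1 = i) : linGram L i j = 1 := by
  rw [linGram, Matrix.of_apply, if_neg (by omega), if_pos hij]

theorem linGram_eq_zero {L : List ℕ} {i j : Fin L.length}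
    (hij : (i : ℕ) + 1 < j ∨ (j : ℕ) + 1 < i) : linGram L i j = 0 := by
  rw [linGram, Matrix.of_apply, if_neg (by omega), if_neg (by omega)]

namespace IsParityRealization

variable {α : Type*} [DecidableEq α] {L : List ℕ} {S : Fin L.length → Finset α}
  {i j t : Fin L.length}

theorem odd_card_inter (h : IsParityRealization L S) (hij : (i : ℕ) + 1 = j ∨ (j : ℕ) + 1 = i) :
    Odd #(S i ∩ S j) := by
  have hmod := h.modEq_linGram i j
  rw [linGram_eq_one hij] at hmod
  exact Nat.odd_iff.2 (by exact_mod_cast hmod)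

theorem even_card_inter (h : IsParityRealization L S) (hij : (i : ℕ) + 1 < j ∨ (j : ℕ) + 1 < i) :
    Even #(S i ∩ S j) := by
  have hmod := h.modEq_linGram i j
  rw [linGram_eq_zero hij] at hmod
  exact Nat.even_iff.2 (by exact_mod_cast hmod)

theorem inter_nonempty (h : IsParityRealization L S) (hij : (i : ℕ) + 1 = j ∨ (j : ℕ) + 1 = i) :
    (S i ∩ S j).Nonempty :=
  card_pos.1 (h.odd_card_inter hij).pos

theorem ne_of_add_one_lt (h : IsParityRealization L S) (hn : 4 ≤ L.length) (hij : (i : ℕ) + 1 < j) :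
    S i ≠ S j := by
  intro heq
  obtain ⟨k, hk⟩ : ∃ k : Fin L.length,
      (((k : ℕ) + 1 = i ∨ (i : ℕ) + 1 = k) ∧ ((k : ℕ) + 1 < j ∨ (j : ℕ) + 1 < k)) ∨
      (((k : ℕ) + 1 = j ∨ (j : ℕ) + 1 = k) ∧ ((k : ℕ) + 1 < i ∨ (i : ℕ) + 1 < k)) := by
    by_cases hi : 0 < (i : ℕ)
    · exact ⟨⟨i - 1, by omega⟩, by dsimp only; omega⟩
    by_cases hj : (j : ℕ) + 1 < L.length
    · exact ⟨⟨j + 1, hj⟩, by dsimp only; omega⟩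
    · exact ⟨⟨1, by omega⟩, by dsimp only; omega⟩
  rcases hk with ⟨hki, hkj⟩ | ⟨hkj, hki⟩
  · exact Nat.not_even_iff_odd.2 (h.odd_card_inter hki.symm) (heq ▸ h.even_card_inter hkj.symm)
  · exact Nat.not_even_iff_odd.2 (h.odd_card_inter hkj.symm) (heq ▸ h.even_card_inter hki.symm)

theorem disjoint_of_two_two (h : IsParityRealization L S) (hn : 4 ≤ L.length)
    (hi : L.get i = 2) (hj : L.get j = 2) (hij : (i : ℕ) + 1 < j ∨ (j : ℕ) + 1 < i) :
    Disjoint (S i) (S j) := by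
  by_contra hd
  have hsub : S i ⊆ S j :=
    subset_of_even_card_inter (h.card_eq i ▸ hi.le) (h.even_card_inter hij) hd
  have heq : S i = S j :=
    eq_of_subset_of_card_le hsub (by rw [h.card_eq, h.card_eq, hi, hj])
  rcases hij with hij | hij
  · exact h.ne_of_add_one_lt hn hij heq
  · exact h.ne_of_add_one_lt hn hij heq.symm

theorem disjoint_of_disjoint_neighbors (h : IsParityRealization L S) (hL : IsSparse L)
    (hn : 4 ≤ L.length) (ht : L.get t = 3) (htj : (t : ℕ) + 1 < j ∨ (j : ℕ) + 1 < t)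
    (hdisj : ∀ r : Fin L.length, L.get r = 2 → ((r : ℕ) + 1 = t ∨ (t : ℕ) + 1 = r) →
      Disjoint (S r) (S j)) :
    Disjoint (S t) (S j) := by
  have h3 := hL.three_le_of_get_eq_three ht
  obtain ⟨r, hr, hr2⟩ := hL.exists_get_eq_two ht (s := t - 1) (by omega) (by omega) (by omega)
  obtain ⟨s, hs, hs2⟩ := hL.exists_get_eq_two ht (s := t + 1) (by omega) (by omega) (by omega)
  exact disjoint_of_even_card_inter (h.card_eq t ▸ ht.le)
    (h.inter_nonempty (by omega)) (h.inter_nonempty (by omega))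
    (h.disjoint_of_two_two hn hr2 hs2 (by omega)) (hdisj r hr2 (by omega))
    (hdisj s hs2 (by omega)) (h.even_card_inter htj)

theorem disjoint_of_three_two (h : IsParityRealization L S) (hL : IsSparse L) (hn : 4 ≤ L.length)
    (ht : L.get t = 3) (hj : L.get j = 2) (htj : (t : ℕ) + 1 < j ∨ (j : ℕ) + 1 < t) :
    Disjoint (S t) (S j) := by
  have hfar {k : Fin L.length} (hk : L.get k = 2) (htk : (t : ℕ) + 2 < k ∨ (k : ℕ) + 2 < t) :
      Disjoint (S t) (S k) :=
    h.disjoint_of_disjoint_neighbors hL hn ht (by omega) fun r hr hrt =>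
      h.disjoint_of_two_two hn hr hk (by omega)
  by_cases htj' : (t : ℕ) + 2 < j ∨ (j : ℕ) + 2 < t
  · exact hfar hj htj'
  obtain ⟨k, hk, hjk, htk⟩ : ∃ k : Fin L.length, L.get k = 2 ∧
      ((j : ℕ) + 1 = k ∨ (k : ℕ) + 1 = j) ∧ ((t : ℕ) + 2 < k ∨ (k : ℕ) + 2 < t) := by
    have h3 := hL.three_le_of_get_eq_three ht
    rcases htj with htj | htj
    · obtain ⟨k, hk, hk2⟩ := hL.exists_get_eq_two ht (s := t + 3) (by omega) (by omega) (by omega)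
      exact ⟨k, hk2, by omega, by omega⟩
    · obtain ⟨k, hk, hk2⟩ := hL.exists_get_eq_two ht (s := t - 3) (by omega) (by omega) (by omega)
      exact ⟨k, hk2, by omega, by omega⟩
  by_contra hd
  have hsub : S j ⊆ S t :=
    subset_of_even_card_inter (h.card_eq j ▸ hj.le) (h.even_card_inter htj.symm)
      (fun hd' => hd hd'.symm)
  obtain ⟨p, hp⟩ := h.inter_nonempty hjk
  exact disjoint_left.1 (hfar hk htk) (hsub (mem_inter.1 hp).1) (mem_inter.1 hp).2

theorem disjoint_of_three_three (h : IsParityRealization L S) (hL : IsSparse L)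
    (hn : 4 ≤ L.length) (ht : L.get t = 3) (hj : L.get j = 3)
    (htj : (t : ℕ) + 1 < j ∨ (j : ℕ) + 1 < t) : Disjoint (S t) (S j) := by
  have hfar : (t : ℕ) + 3 < j ∨ (j : ℕ) + 3 < t := by
    by_contra hclose
    obtain ⟨r, hr, hr2⟩ := hL.exists_get_eq_two ht (s := j) (by omega) (by omega) (by omega)
    rw [Fin.ext hr] at hr2
    omega
  exact h.disjoint_of_disjoint_neighbors hL hn ht htj fun r hr hrt =>
    (h.disjoint_of_three_two hL hn hj hr (by omega)).symm

theorem disjoint (h : IsParityRealization L S) (hL : IsSparse L) (hn : 4 ≤ L.length)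
    (hij : (i : ℕ) + 1 < j ∨ (j : ℕ) + 1 < i) : Disjoint (S i) (S j) := by
  rcases hL.get_eq_two_or_three i with hi | hi <;> rcases hL.get_eq_two_or_three j with hj | hj
  · exact h.disjoint_of_two_two hn hi hj hij
  · exact (h.disjoint_of_three_two hL hn hj hi hij.symm).symm
  · exact h.disjoint_of_three_two hL hn hi hj hij
  · exact h.disjoint_of_three_three hL hn hi hj hij

theorem card_inter_eq_one (h : IsParityRealization L S) (hL : IsSparse L)
    (hij : (i : ℕ) + 1 = j ∨ (j : ℕ) + 1 = i) : #(S i ∩ S j) = 1 := by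
  obtain ⟨c, hc⟩ := h.odd_card_inter hij
  have hi : #(S i ∩ S j) ≤ L.get i := h.card_eq i ▸ card_le_card inter_subset_left
  have hj : #(S i ∩ S j) ≤ L.get j := h.card_eq j ▸ card_le_card inter_subset_right
  have htwo : L.get i = 2 ∨ L.get j = 2 := by
    refine (hL.get_eq_two_or_three i).imp_right fun hi3 => ?_
    obtain ⟨r, hr, hr2⟩ := hL.exists_get_eq_two hi3 (s := j) (by omega) (by omega) (by omega)
    rwa [Fin.ext hr] at hr2
  omega

theorem card_inter_eq_linGram (h : IsParityRealization L S) (hL : IsSparse L) (hn : 4 ≤ L.length)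
    (i j : Fin L.length) : (#(S i ∩ S j) : ℤ) = linGram L i j := by
  obtain rfl | hij | hij : i = j ∨ ((i : ℕ) + 1 = j ∨ (j : ℕ) + 1 = i) ∨
      ((i : ℕ) + 1 < j ∨ (j : ℕ) + 1 < i) := by omega
  · rw [inter_self, h.card_eq, linGram_self]
  · rw [h.card_inter_eq_one hL hij, linGram_eq_one hij, Nat.cast_one]
  · rw [disjoint_iff_inter_eq_empty.1 (h.disjoint hL hn hij), linGram_eq_zero hij, card_empty,
      Nat.cast_zero]

theorem card_filter_mem_le_two (h : IsParityRealization L S) (hL : IsSparse L)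
    (hn : 4 ≤ L.length) (p : α) : #{i | p ∈ S i} ≤ 2 := by
  have hclose {i j : Fin L.length} (hi : p ∈ S i) (hj : p ∈ S j) : (i : ℕ) ≤ j + 1 := by
    by_contra hlt
    exact disjoint_left.1 (h.disjoint hL hn (by omega)) hi hj
  by_contra hlt
  obtain ⟨i, j, k, hi, hj, hk, hij, hik, hjk⟩ := two_lt_card_iff.1 (not_le.1 hlt)
  simp only [mem_filter, mem_univ, true_and] at hi hj hk
  have := hclose hi hj
  have := hclose hj hi
  have := hclose hi hk
  have := hclose hk hi
  have := hclose hj hk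
  have := hclose hk hj
  omega

end IsParityRealization

theorem exists_perm_mem_iff_of_isParityRealization {α : Type*} [Finite α] [DecidableEq α]
    {L : List ℕ} {S S' : Fin L.length → Finset α} (hL : IsSparse L) (hn : 4 ≤ L.length)
    (h : IsParityRealization L S) (h' : IsParityRealization L S') :
    ∃ σ : Equiv.Perm α, ∀ i p, σ p ∈ S i ↔ p ∈ S' i := by
  cases nonempty_fintype α
  have hpair (S : Fin L.length → Finset α) (i j : Fin L.length) :
      #{p | {i, j} ⊆ ({k | p ∈ S k} : Finset (Fin L.length))} = #(S i ∩ S j) := by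
    congr 1
    ext p
    simp [insert_subset_iff]
  obtain ⟨σ, hσ⟩ := exists_perm_comp_eq_of_card_pair_subset_eq
    (h.card_filter_mem_le_two hL hn) (h'.card_filter_mem_le_two hL hn) fun i j => by
      rw [hpair, hpair]
      exact_mod_cast (h.card_inter_eq_linGram hL hn i j).trans
        (h'.card_inter_eq_linGram hL hn i j).symm
  exact ⟨σ, fun i p => by simpa using Finset.ext_iff.1 (hσ p) i⟩

end ParityRealization

section TernaryVectors

open Finset

variable {N : ℕ}

/-- The support of an integer vector, as a finite set of coordinates. -/
def vecSupport (v : Fin N → ℤ) : Finset (Fin N) := {p | v p ≠ 0}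

theorem mem_vecSupport {v : Fin N → ℤ} {p : Fin N} : p ∈ vecSupport v ↔ v p ≠ 0 := by
  simp [vecSupport]

/-- Integer vectors all of whose entries are `0`, `1` or `-1`. -/
def IsTernary (v : Fin N → ℤ) : Prop := ∀ p, |v p| ≤ 1

theorem isTernary_of_dot_self_le_three {v : Fin N → ℤ} (h : dot v v ≤ 3) : IsTernary v := by
  intro p
  have hle : v p * v p ≤ dot v v :=
    single_le_sum (f := fun q => v q * v q) (fun q _ => mul_self_nonneg (v q)) (mem_univ p)
  rw [abs_le]
  constructor <;> nlinarith

variable {v w : Fin N → ℤ}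

theorem card_vecSupport_inter_eq_sum_abs (hv : IsTernary v) (hw : IsTernary w) :
    (#(vecSupport v ∩ vecSupport w) : ℤ) = ∑ p, |v p * w p| := by
  have hterm (p : Fin N) :
      |v p * w p| = if p ∈ vecSupport v ∩ vecSupport w then (1 : ℤ) else 0 := by
    rw [abs_mul]
    rcases Int.abs_le_one_iff.1 (hv p) with h | h | h <;>
      rcases Int.abs_le_one_iff.1 (hw p) with h' | h' | h' <;> simp [mem_vecSupport, h, h']
  simp only [hterm, sum_boole, filter_univ_mem]

theorem card_vecSupport_inter_modEq_dot (hv : IsTernary v) (hw : IsTernary w) :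
    (#(vecSupport v ∩ vecSupport w) : ℤ) ≡ dot v w [ZMOD 2] := by
  rw [card_vecSupport_inter_eq_sum_abs hv hw]
  refine Int.ModEq.sum fun p _ => ?_
  rcases abs_choice (v p * w p) with h | h <;> rw [h]
  exact Int.modEq_iff_dvd.2 ⟨v p * w p, by ring⟩

theorem card_vecSupport_eq_dot_self (hv : IsTernary v) : (#(vecSupport v) : ℤ) = dot v v := by
  simpa [dot, abs_mul_self] using card_vecSupport_inter_eq_sum_abs hv hv

theorem eq_of_dot_eq_card_vecSupport_inter (hv : IsTernary v) (hw : IsTernary w)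
    (h : dot v w = #(vecSupport v ∩ vecSupport w)) {p : Fin N} (hpv : v p ≠ 0) (hpw : w p ≠ 0) :
    v p = w p := by
  rw [card_vecSupport_inter_eq_sum_abs hv hw, dot] at h
  have habs : v p * w p = |v p * w p| :=
    (sum_eq_sum_iff_of_le fun q _ => le_abs_self _).1 h p (mem_univ p)
  rcases Int.abs_le_one_iff.1 (hv p) with h | h | h <;>
    rcases Int.abs_le_one_iff.1 (hw p) with h' | h' | h' <;> simp_all

theorem exists_sign_of_dot_eq_card_vecSupport_inter {κ : Type*} {X : κ → Fin N → ℤ}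
    (hX : ∀ i, IsTernary (X i))
    (h : ∀ i j, dot (X i) (X j) = #(vecSupport (X i) ∩ vecSupport (X j))) (p : Fin N) :
    ∃ ε : ℤ, (ε = 1 ∨ ε = -1) ∧ ∀ i, X i p = if p ∈ vecSupport (X i) then ε else 0 := by
  by_cases hp : ∃ i, X i p ≠ 0
  · obtain ⟨i, hi⟩ := hp
    refine ⟨X i p, (Int.abs_le_one_iff.1 (hX i p)).resolve_left hi, fun j => ?_⟩
    split_ifs with hj
    · exact eq_of_dot_eq_card_vecSupport_inter (hX j) (hX i) (h j i) (mem_vecSupport.1 hj) hi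
    · simpa [mem_vecSupport] using hj
  · push Not at hp
    exact ⟨1, Or.inl rfl, fun i => by simp [mem_vecSupport, hp i]⟩

end TernaryVectors

section Uniqueness

open Finset

variable {N : ℕ} {L : List ℕ} {X Y : Fin L.length → Fin N → ℤ}

theorem isTernary_of_dot_eq_linGram (hL : IsSparse L)
    (hX : ∀ i j, dot (X i) (X j) = linGram L i j) (i : Fin L.length) : IsTernary (X i) := by
  apply isTernary_of_dot_self_le_three
  rw [hX, linGram_self]
  rcases hL.get_eq_two_or_three i with h | h <;> simp only [h] <;> norm_num

theorem isParityRealization_vecSupport (hL : IsSparse L)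
    (hX : ∀ i j, dot (X i) (X j) = linGram L i j) :
    IsParityRealization L fun i => vecSupport (X i) where
  card_eq i := by
    have hcard := card_vecSupport_eq_dot_self (isTernary_of_dot_eq_linGram hL hX i)
    rw [hX, linGram_self] at hcard
    exact_mod_cast hcard
  modEq_linGram i j := hX i j ▸ card_vecSupport_inter_modEq_dot
    (isTernary_of_dot_eq_linGram hL hX i) (isTernary_of_dot_eq_linGram hL hX j)

theorem exists_sign_of_dot_eq_linGram (hL : IsSparse L) (hn : 4 ≤ L.length)
    (hX : ∀ i j, dot (X i) (X j) = linGram L i j) (p : Fin N) :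
    ∃ ε : ℤ, (ε = 1 ∨ ε = -1) ∧ ∀ i, X i p = if p ∈ vecSupport (X i) then ε else 0 :=
  exists_sign_of_dot_eq_card_vecSupport_inter (isTernary_of_dot_eq_linGram hL hX)
    (fun i j => (hX i j).trans
      ((isParityRealization_vecSupport hL hX).card_inter_eq_linGram hL hn i j).symm) p

theorem exists_signedPerm_of_dot_eq_linGram (hL : IsSparse L) (hn : 4 ≤ L.length)
    (hX : ∀ i j, dot (X i) (X j) = linGram L i j) (hY : ∀ i j, dot (Y i) (Y j) = linGram L i j) :
    ∃ σ : Equiv.Perm (Fin N), ∃ ε : Fin N → ℤ,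
      (∀ p, ε p = 1 ∨ ε p = -1) ∧ ∀ i p, Y i p = ε p * X i (σ p) := by
  obtain ⟨σ, hσ⟩ := exists_perm_mem_iff_of_isParityRealization hL hn
    (isParityRealization_vecSupport hL hX) (isParityRealization_vecSupport hL hY)
  choose s hs hXs using exists_sign_of_dot_eq_linGram hL hn hX
  choose r hr hYr using exists_sign_of_dot_eq_linGram hL hn hY
  refine ⟨σ, fun p => r p * s (σ p), fun p => ?_, fun i p => ?_⟩
  · rcases hr p with h | h <;> rcases hs (σ p) with h' | h' <;> simp [h, h']
  · have hsq : s (σ p) * s (σ p) = 1 := by rcases hs (σ p) with h | h <;> simp [h]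
    rw [hYr p i, hXs (σ p) i, if_congr (hσ i p) rfl rfl, mul_assoc, mul_ite, hsq, mul_ite]
    simp

theorem dot_apply_single {n : ℕ} {φ : (Fin n → ℤ) →ₗ[ℤ] (Fin N → ℤ)}
    {G : Matrix (Fin n) (Fin n) ℤ}
    (hform : ∀ v w : Fin n → ℤ, dot (φ v) (φ w) = ∑ i, ∑ j, v i * G i j * w j) (i j : Fin n) :
    dot (φ (Pi.single i 1)) (φ (Pi.single j 1)) = G i j := by
  simp [hform, Pi.single_apply]

theorem stmt11_general (hL : IsSparse L) (hn : 4 ≤ L.length)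
    {φ φ' : (Fin L.length → ℤ) →ₗ[ℤ] (Fin N → ℤ)}
    (hform : ∀ v w : Fin L.length → ℤ,
      dot (φ v) (φ w) = ∑ i, ∑ j, v i * linGram L i j * w j)
    (hform' : ∀ v w : Fin L.length → ℤ,
      dot (φ' v) (φ' w) = ∑ i, ∑ j, v i * linGram L i j * w j) :
    ∃ σ : Equiv.Perm (Fin N), ∃ ε : Fin N → ℤ,
      (∀ i, ε i = 1 ∨ ε i = -1) ∧
      ∀ v : Fin L.length → ℤ, ∀ i : Fin N, φ' v i = ε i * φ v (σ i) := by
  obtain ⟨σ, ε, hε, h⟩ := exists_signedPerm_of_dot_eq_linGram hL hn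
    (dot_apply_single hform) (dot_apply_single hform')
  refine ⟨σ, ε, hε, fun v p => ?_⟩
  have hcoord : LinearMap.proj p ∘ₗ φ' = ε p • LinearMap.proj (σ p) ∘ₗ φ :=
    (Pi.basisFun ℤ _).ext fun j => by simpa using h j p
  exact LinearMap.congr_fun hcoord v

end Uniqueness

/-- Any two embeddings of the linear-graph lattice into `ℤ^N`, for
`N ≥ m + rk(Γ)`, differ by an automorphism of `ℤ^N` given by permuting and
changing signs of the standard basis vectors. -/
theorem stmt11 {N m : ℕ} (hm : 1 ≤ m) (a : ℕ → ℕ) (ha : ∀ i, 1 ≤ i → i ≤ m → 6 ≤ a i)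
    (hN : m + (weightList m a).length ≤ N)
    (φ φ' : (Fin (weightList m a).length → ℤ) →ₗ[ℤ] (Fin N → ℤ))
    (hinj : Function.Injective φ) (hinj' : Function.Injective φ')
    (hform : ∀ v w : Fin (weightList m a).length → ℤ,
      dot (φ v) (φ w) = ∑ i, ∑ j, v i * linGram (weightList m a) i j * w j)
    (hform' : ∀ v w : Fin (weightList m a).length → ℤ,
      dot (φ' v) (φ' w) = ∑ i, ∑ j, v i * linGram (weightList m a) i j * w j) :
    ∃ σ : Equiv.Perm (Fin N), ∃ ε : Fin N → ℤ,
      (∀ i, ε i = 1 ∨ ε i = -1) ∧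
      ∀ v : Fin (weightList m a).length → ℤ, ∀ i : Fin N, φ' v i = ε i * φ v (σ i) :=
  stmt11_general (isSparse_weightList hm ha) (four_le_length_weightList (ha 1 le_rfl hm))
    hform hform'
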